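/- Let S be a numerical semigroup with multiplicity m such that (𝔑(S), ⪯) is a lattice, and let a be a minimal generator of S with a ≠ m and a > F(S). Then (𝔑(S \ {a}), ⪯) is a lattice as well, i.e., every pair of normalized ideals of S \ {a} has a supremum and an infimum with respect to ⪯. -/

import Mathlib

open Pointwise

/-- A numerical semigroup: an additive submonoid of `ℕ` with finite complement. -/
def IsNumericalSemigroup (S : Set ℕ) : Prop :=
  0 ∈ S ∧ (∀ a ∈ S, ∀ b ∈ S, a + b ∈ S) ∧ Sᶜ.Finite

/-- A normalized (relative) ideal of `S`: a subset of `ℕ` with `min I = 0`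
(equivalently `0 ∈ I`) satisfying `I + S ⊆ I`. -/
def IsNormalizedIdeal (S I : Set ℕ) : Prop :=
  0 ∈ I ∧ ∀ i ∈ I, ∀ s ∈ S, i + s ∈ I

/-- The set `𝔑(S)` of normalized ideals of `S`. -/
def NI (S : Set ℕ) : Set (Set ℕ) := {I : Set ℕ | IsNormalizedIdeal S I}

/-- The multiplicity of `S`: its least nonzero element. -/
noncomputable def multNS (S : Set ℕ) : ℕ := sInf {n : ℕ | n ∈ S ∧ n ≠ 0}

/-- The Frobenius number of `S` (or of an ideal): the largest natural number not in `S`. -/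
noncomputable def frobNS (S : Set ℕ) : ℕ := sSup Sᶜ

/-- A minimal generator of `S`: a nonzero element of `S` that is not the sum
of two nonzero elements of `S`. -/
def IsMinimalGenerator (S : Set ℕ) (a : ℕ) : Prop :=
  a ∈ S ∧ a ≠ 0 ∧ ¬ ∃ b ∈ S, ∃ c ∈ S, b ≠ 0 ∧ c ≠ 0 ∧ a = b + c

/-- A minimal generator of an ideal `I` of a numerical semigroup `T`:
an element `x ∈ I` with `x ≠ y + t` for every `y ∈ I` and nonzero `t ∈ T`. -/
def IsMinGenOfIdeal (T I : Set ℕ) (x : ℕ) : Prop :=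
  x ∈ I ∧ ∀ y ∈ I, ∀ t ∈ T, t ≠ 0 → x ≠ y + t

/-- The order `⪯` on normalized ideals: `I ⪯ J` iff `I + K = J` for some `K ∈ 𝔑(S)`. -/
def Preceq (S I J : Set ℕ) : Prop :=
  ∃ K : Set ℕ, IsNormalizedIdeal S K ∧ I + K = J

/-- `M` is the supremum of `{I, J}` in `(𝔑(S), ⪯)`. -/
def IsSupNI (S I J M : Set ℕ) : Prop :=
  IsNormalizedIdeal S M ∧ Preceq S I M ∧ Preceq S J M ∧
    ∀ L : Set ℕ, IsNormalizedIdeal S L → Preceq S I L → Preceq S J L → Preceq S M L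

/-- `M` is the infimum of `{I, J}` in `(𝔑(S), ⪯)`. -/
def IsInfNI (S I J M : Set ℕ) : Prop :=
  IsNormalizedIdeal S M ∧ Preceq S M I ∧ Preceq S M J ∧
    ∀ L : Set ℕ, IsNormalizedIdeal S L → Preceq S L I → Preceq S L J → Preceq S L M

/-- `(𝔑(S), ⪯)` is a lattice: every pair of normalized ideals has a supremum
and an infimum with respect to `⪯`. -/
def NILattice (S : Set ℕ) : Prop :=
  ∀ I J : Set ℕ, IsNormalizedIdeal S I → IsNormalizedIdeal S J →
    (∃ M : Set ℕ, IsSupNI S I J M) ∧ (∃ M : Set ℕ, IsInfNI S I J M)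

/-- The ordinary numerical semigroup `H_m = {0} ∪ {n : n ≥ m}`. -/
def ordinaryNS (m : ℕ) : Set ℕ := {0} ∪ {n : ℕ | m ≤ n}

/-- `I ∈ 𝔑(S) \ {S}` is `+`-irreducible if `I = J + K` with `J, K ∈ 𝔑(S)`
implies `I = J` or `I = K`. -/
def PlusIrreducible (S I : Set ℕ) : Prop :=
  IsNormalizedIdeal S I ∧ I ≠ S ∧
    ∀ J K : Set ℕ, IsNormalizedIdeal S J → IsNormalizedIdeal S K → I = J + K → I = J ∨ I = K

/-!
Write `T = S \ {a}`. Adjoining `a` to an ideal of `T` is left adjoint to the inclusion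
`𝔑(S) ⊆ 𝔑(T)`, so the supremum `M` of `I ∪ {a}` and `J ∪ {a}` in `𝔑(S)` lies below every upper
bound of `I` and `J` in `𝔑(T)` that contains `a`. If there is an upper bound omitting `a`, the
supremum in `𝔑(T)` is instead the least upper bound `N` omitting `a`, and `N ∪ {a} = M`.

That `N` exists uses `m ≤ 4`, which is forced by the lattice property. In an ideal omitting `a` the
residue classes of `0` and `a` are determined, which leaves at most two classes modulo `m`. Unless
`m = 4` and `a` is odd, no sum of two of these is again one of them, so sums of ideals that omit `a`
are unions and `N = I ∪ J`. If `m = 4` and `a` is odd, then `3a + 3a ≡ 2` is the only such sum, and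
`⪯` becomes an explicit arithmetic relation between the least elements of the classes `3a` and `2`.
-/

section Order

variable {α : Type*} [Preorder α]

theorem exists_isLUB_of_finite [Finite α] {b : α} (hb : IsBot b)
    (hsup : ∀ x y : α, ∃ z, IsLUB {x, y} z) (s : Set α) : ∃ z, IsLUB s z := by
  induction s, s.toFinite using Set.Finite.induction_on with
  | empty => exact ⟨b, isLUB_empty_iff.2 hb⟩
  | @insert x s _ _ ih =>
    obtain ⟨y, hy⟩ := ih
    obtain ⟨z, hz⟩ := hsup x y
    have upperBounds_eq : upperBounds (insert x s) = upperBounds {x, y} := by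
      rw [upperBounds_insert, upperBounds_insert, upperBounds_singleton, hy.upperBounds_eq]
    exact ⟨z, by rwa [IsLUB, upperBounds_eq]⟩

theorem exists_isGLB_pair_of_finite [Finite α] {b : α} (hb : IsBot b)
    (hsup : ∀ x y : α, ∃ z, IsLUB {x, y} z) (x y : α) : ∃ z, IsGLB {x, y} z :=
  (exists_isLUB_of_finite hb hsup (lowerBounds {x, y})).imp fun _ => isLUB_lowerBounds.1

end Order

section NormalizedIdeals

variable {S T I J K L X Y : Set ℕ} {m : ℕ}

theorem IsNormalizedIdeal.subset (hX : IsNormalizedIdeal S X) : S ⊆ X := fun s hs => by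
  simpa using hX.2 0 hX.1 s hs

theorem IsNormalizedIdeal.anti (hTS : T ⊆ S) (hX : IsNormalizedIdeal S X) :
    IsNormalizedIdeal T X :=
  ⟨hX.1, fun i hi s hs => hX.2 i hi s (hTS hs)⟩

theorem IsNormalizedIdeal.add (hX : IsNormalizedIdeal S X) (hY : IsNormalizedIdeal S Y) :
    IsNormalizedIdeal S (X + Y) := by
  refine ⟨⟨0, hX.1, 0, hY.1, rfl⟩, ?_⟩
  rintro _ ⟨x, hx, y, hy, rfl⟩ s hs
  exact ⟨x, hx, y + s, hY.2 y hy s hs, (add_assoc x y s).symm⟩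

theorem IsNormalizedIdeal.union (hX : IsNormalizedIdeal S X) (hY : IsNormalizedIdeal S Y) :
    IsNormalizedIdeal S (X ∪ Y) :=
  ⟨.inl hX.1, fun i hi s hs => hi.imp (hX.2 i · s hs) (hY.2 i · s hs)⟩

theorem IsNormalizedIdeal.inter (hX : IsNormalizedIdeal S X) (hY : IsNormalizedIdeal S Y) :
    IsNormalizedIdeal S (X ∩ Y) :=
  ⟨⟨hX.1, hY.1⟩, fun i hi s hs => ⟨hX.2 i hi.1 s hs, hY.2 i hi.2 s hs⟩⟩

theorem IsNormalizedIdeal.mem_of_mod_eq (hX : IsNormalizedIdeal S X) (hm : m ∈ S) {x y : ℕ}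
    (hx : x ∈ X) (hxy : x ≤ y) (hmod : y % m = x % m) : y ∈ X := by
  have add_mul_mem (k : ℕ) : x + m * k ∈ X := by
    induction k with
    | zero => simpa using hx
    | succ k ih => simpa [mul_add, add_assoc] using hX.2 _ ih m hm
  obtain ⟨k, hk⟩ := (Nat.modEq_iff_dvd' hxy).1 hmod.symm
  have hy : x + m * k = y := by lia
  exact hy ▸ add_mul_mem k

theorem IsNormalizedIdeal.mem_of_mod_eq_zero (hX : IsNormalizedIdeal S X) (hm : m ∈ S) {x : ℕ}
    (hmod : x % m = 0) : x ∈ X :=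
  hX.mem_of_mod_eq hm hX.1 x.zero_le (by simpa using hmod)

theorem Preceq.subset (h : Preceq S I L) : I ⊆ L := by
  obtain ⟨K, hK, rfl⟩ := h
  exact fun i hi => ⟨i, hi, 0, hK.1, rfl⟩

theorem Preceq.trans (hIJ : Preceq S I J) (hJL : Preceq S J L) : Preceq S I L := by
  obtain ⟨P, hP, rfl⟩ := hIJ
  obtain ⟨Q, hQ, rfl⟩ := hJL
  exact ⟨P + Q, hP.add hQ, (add_assoc I P Q).symm⟩

/- The right-hand side does not involve `S`: if `I + K = L` for some `K`, then the largest such `K`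
is `{k | I + k ⊆ L}`, which is an ideal whenever `L` is. -/
theorem preceq_iff (hL : IsNormalizedIdeal S L) :
    Preceq S I L ↔ I ⊆ L ∧ ∀ z ∈ L, ∃ i ∈ I, ∃ k, i + k = z ∧ ∀ j ∈ I, j + k ∈ L := by
  constructor
  · intro h
    refine ⟨h.subset, ?_⟩
    obtain ⟨K, -, rfl⟩ := h
    rintro _ ⟨i, hi, k, hk, rfl⟩
    exact ⟨i, hi, k, rfl, fun j hj => Set.add_mem_add hj hk⟩
  · rintro ⟨hIL, hdecomp⟩
    refine ⟨{k | ∀ j ∈ I, j + k ∈ L}, ⟨hIL, fun k hk s hs j hj => ?_⟩, ?_⟩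
    · rw [← add_assoc]
      exact hL.2 _ (hk j hj) s hs
    · ext z
      constructor
      · rintro ⟨i, hi, k, hk, rfl⟩
        exact hk i hi
      · intro hz
        obtain ⟨i, hi, k, hik, hk⟩ := hdecomp z hz
        exact ⟨i, hi, k, hk, hik⟩

theorem preceq_congr_left (hLS : IsNormalizedIdeal S L) (hLT : IsNormalizedIdeal T L) :
    Preceq S I L ↔ Preceq T I L :=
  (preceq_iff hLS).trans (preceq_iff hLT).symm

theorem preceq_refl (hI : IsNormalizedIdeal S I) : Preceq S I I :=
  (preceq_iff hI).2 ⟨subset_rfl, fun z hz => ⟨z, hz, 0, rfl, fun _ hj => hj⟩⟩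

theorem self_preceq (hS : 0 ∈ S) (hI : IsNormalizedIdeal S I) : Preceq S S I :=
  (preceq_iff hI).2 ⟨hI.subset, fun z hz =>
    ⟨0, hS, z, zero_add z, fun s hs => add_comm s z ▸ hI.2 z hz s hs⟩⟩

/-- `𝔑(S)` as a type of its own, to be ordered by `⪯`; the subtype `NI S` would inherit the
order `⊆` of `Set ℕ`. -/
@[ext]
structure NormalizedIdeal (S : Set ℕ) where
  carrier : Set ℕ
  isNormalizedIdeal : IsNormalizedIdeal S carrier

namespace NormalizedIdeal

instance (S : Set ℕ) : Preorder (NormalizedIdeal S) where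
  le I J := Preceq S I.carrier J.carrier
  le_refl I := preceq_refl I.isNormalizedIdeal
  le_trans _ _ _ := Preceq.trans

theorem finite (hS : Sᶜ.Finite) : Finite (NormalizedIdeal S) := by
  have := hS.finite_subsets.to_subtype
  exact .of_injective
    (fun I => (⟨I.carrierᶜ, Set.compl_subset_compl.2 I.isNormalizedIdeal.subset⟩ : {X | X ⊆ Sᶜ}))
    fun I J hIJ => NormalizedIdeal.ext (compl_injective (congrArg Subtype.val hIJ))

end NormalizedIdeal

theorem NILattice_of_exists_isSupNI (hS : IsNumericalSemigroup S)
    (hsup : ∀ I J, IsNormalizedIdeal S I → IsNormalizedIdeal S J → ∃ M, IsSupNI S I J M) :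
    NILattice S := by
  have : Finite (NormalizedIdeal S) := NormalizedIdeal.finite hS.2.2
  have hbot : IsBot (⟨S, hS.1, hS.2.1⟩ : NormalizedIdeal S) := fun I =>
    self_preceq hS.1 I.isNormalizedIdeal
  have exists_isLUB (I J : NormalizedIdeal S) : ∃ M, IsLUB {I, J} M := by
    obtain ⟨M, hM, hIM, hJM, hleast⟩ := hsup _ _ I.isNormalizedIdeal J.isNormalizedIdeal
    refine ⟨⟨M, hM⟩, ?_, fun L hL => hleast _ L.isNormalizedIdeal (hL (.inl rfl)) (hL (.inr rfl))⟩
    rintro _ (rfl | rfl)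
    exacts [hIM, hJM]
  intro I J hI hJ
  obtain ⟨M, hM, hgreatest⟩ := exists_isGLB_pair_of_finite hbot exists_isLUB ⟨I, hI⟩ ⟨J, hJ⟩
  refine ⟨hsup I J hI hJ, _, M.isNormalizedIdeal, hM (.inl rfl), hM (.inr rfl), fun L hL hLI hLJ =>
    hgreatest (a := ⟨L, hL⟩) ?_⟩
  rintro _ (rfl | rfl)
  exacts [hLI, hLJ]

end NormalizedIdeals

section Multiplicity

variable {S : Set ℕ}

theorem isNormalizedIdeal_union_Ici {n : ℕ} (hS : ∀ s ∈ S, s ≠ 0 → n ≤ s) {D : Set ℕ}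
    (hD : 0 ∈ D) : IsNormalizedIdeal S (D ∪ Set.Ici n) := by
  refine ⟨.inl hD, fun i hi s hs => ?_⟩
  rcases eq_or_ne s 0 with rfl | hs0
  · exact hi
  · exact .inr (le_add_left (hS s hs hs0))

theorem union_Ici_add_union_Ici {D E : Set ℕ} (hE : 0 ∈ E) (n : ℕ) :
    (D ∪ Set.Ici n) + (E ∪ Set.Ici n) = (D + E) ∪ Set.Ici n := by
  ext z
  constructor
  · rintro ⟨d, hd | hd, e, he | he, rfl⟩
    · exact .inl ⟨d, hd, e, he, rfl⟩
    · exact .inr (Set.mem_Ici.2 (le_add_left he))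
    · exact .inr (Set.mem_Ici.2 (le_add_right hd))
    · exact .inr (Set.mem_Ici.2 (le_add_right hd))
  · rintro (⟨d, hd, e, he, rfl⟩ | hz)
    · exact ⟨d, .inl hd, e, .inl he, rfl⟩
    · exact ⟨z, .inr hz, 0, .inl hE, rfl⟩

theorem preceq_union_Ici_of_add_eq {n : ℕ} (hS : ∀ s ∈ S, s ≠ 0 → n ≤ s) {D E F : Set ℕ}
    (hE : 0 ∈ E) (hF : (D + E) ∪ Set.Ici n = F ∪ Set.Ici n) :
    Preceq S (D ∪ Set.Ici n) (F ∪ Set.Ici n) :=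
  ⟨E ∪ Set.Ici n, isNormalizedIdeal_union_Ici hS hE, by rw [union_Ici_add_union_Ici hE, hF]⟩

/- For multiplicity at least `5`, the ideals with gaps `2, 3, 4` and `2, 4` have the two upper
bounds with single gap `4` and `2`. A supremum `M` would lie in both, yet writing `3 ∈ M` as a sum
in `{0, 1, 5, →} + K = M` puts `2` or `4` into `M`. -/
theorem NILattice.multNS_le_four (hlat : NILattice S) : multNS S ≤ 4 := by
  by_contra! hmult
  have hS (s : ℕ) (hs : s ∈ S) (hs0 : s ≠ 0) : 5 ≤ s := by
    have : multNS S ≤ s := Nat.sInf_le ⟨hs, hs0⟩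
    lia
  obtain ⟨M, -, ⟨K, -, hIK⟩, hJM, hleast⟩ :=
    (hlat ({0, 1} ∪ Set.Ici 5) ({0, 1, 3} ∪ Set.Ici 5)
      (isNormalizedIdeal_union_Ici hS (by simp)) (isNormalizedIdeal_union_Ici hS (by simp))).1
  have subset_of_gap_four : M ⊆ {0, 1, 2, 3} ∪ Set.Ici 5 := by
    refine (hleast _ (isNormalizedIdeal_union_Ici hS (by simp)) ?_ ?_).subset <;>
    · refine preceq_union_Ici_of_add_eq hS (E := {0, 2}) (by simp) ?_
      ext z
      simp only [Set.mem_union, Set.mem_add, Set.mem_insert_iff, Set.mem_singleton_iff,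
        Set.mem_Ici, exists_eq_or_imp, exists_eq_left]
      lia
  have subset_of_gap_two : M ⊆ {0, 1, 3, 4} ∪ Set.Ici 5 := by
    refine (hleast _ (isNormalizedIdeal_union_Ici hS (by simp)) ?_ ?_).subset <;>
    · refine preceq_union_Ici_of_add_eq hS (E := {0, 3}) (by simp) ?_
      ext z
      simp only [Set.mem_union, Set.mem_add, Set.mem_insert_iff, Set.mem_singleton_iff,
        Set.mem_Ici, exists_eq_or_imp, exists_eq_left]
      lia
  have two_notMem : 2 ∉ M := fun h => by simpa using subset_of_gap_two h
  have four_notMem : 4 ∉ M := fun h => by simpa using subset_of_gap_four h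
  have three_mem : 3 ∈ M := hJM.subset (by simp)
  rw [← hIK] at two_notMem four_notMem three_mem
  obtain ⟨i, hi, k, hk, hik⟩ := three_mem
  have hik : i + k = 3 := hik
  simp only [Set.mem_union, Set.mem_insert_iff, Set.mem_singleton_iff, Set.mem_Ici] at hi
  rcases hi with (rfl | rfl) | hi
  · obtain rfl : k = 3 := by lia
    exact four_notMem ⟨1, by simp, 3, hk, rfl⟩
  · obtain rfl : k = 2 := by lia
    exact two_notMem ⟨0, by simp, 2, hk, rfl⟩
  · lia

end Multiplicity

section Omitting

variable {T I J L X Y : Set ℕ} {a m : ℕ}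

/-- `N` is the supremum of `I` and `J` among the normalized ideals of `T` that omit `a`. The field
`subset_of_preceq` says that `N` also bounds from below those upper bounds that differ from `N` at
most by the element `a`; it serves to identify `insert a N` with a supremum in `𝔑(T ∪ {a})`. -/
structure IsSupOmitting (T : Set ℕ) (a : ℕ) (I J N : Set ℕ) : Prop where
  isNormalizedIdeal : IsNormalizedIdeal T N
  notMem : a ∉ N
  left_preceq : Preceq T I N
  right_preceq : Preceq T J N
  preceq : ∀ L, IsNormalizedIdeal T L → a ∉ L → Preceq T I L → Preceq T J L → Preceq T N L
  subset_of_preceq : ∀ M, IsNormalizedIdeal T M → M ⊆ insert a N → Preceq T I M → Preceq T J M →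
    N ⊆ M

theorem IsSupOmitting.symm {N : Set ℕ} (h : IsSupOmitting T a I J N) : IsSupOmitting T a J I N where
  isNormalizedIdeal := h.isNormalizedIdeal
  notMem := h.notMem
  left_preceq := h.right_preceq
  right_preceq := h.left_preceq
  preceq L hL haL hJL hIL := h.preceq L hL haL hIL hJL
  subset_of_preceq M hM hMN hJM hIM := h.subset_of_preceq M hM hMN hIM hJM

theorem isSupOmitting_union
    (add_eq_union : ∀ X Y, IsNormalizedIdeal T X → IsNormalizedIdeal T Y → a ∉ X + Y →
      X + Y = X ∪ Y)
    (hI : IsNormalizedIdeal T I) (hJ : IsNormalizedIdeal T J) (haL : a ∉ L) (hIL : Preceq T I L)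
    (hJL : Preceq T J L) : IsSupOmitting T a I J (I ∪ J) := by
  have add_eq_union_of_subset {X Y L : Set ℕ} (hX : IsNormalizedIdeal T X)
      (hY : IsNormalizedIdeal T Y) (haL : a ∉ L) (hL : X + Y ⊆ L) : X + Y = X ∪ Y :=
    add_eq_union X Y hX hY fun ha => haL (hL ha)
  have preceq_union {I J : Set ℕ} (hI : IsNormalizedIdeal T I) (hJ : IsNormalizedIdeal T J)
      (hIL : Preceq T I L) (hJL : J ⊆ L) : Preceq T I (I ∪ J) := by
    obtain ⟨K, hK, rfl⟩ := hIL
    rw [add_eq_union I K hI hK haL] at hJL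
    refine ⟨K ∩ J, hK.inter hJ, ?_⟩
    rw [add_eq_union_of_subset hI (hK.inter hJ) haL (Set.add_subset_add_left Set.inter_subset_left),
      Set.union_inter_distrib_left, Set.inter_eq_right]
    exact Set.union_subset Set.subset_union_left hJL
  refine ⟨hI.union hJ, fun ha => haL (ha.elim (hIL.subset ·) (hJL.subset ·)),
    preceq_union hI hJ hIL hJL.subset, Set.union_comm J I ▸ preceq_union hJ hI hJL hIL.subset,
    ?_, fun M _ _ hIM hJM => Set.union_subset hIM.subset hJM.subset⟩
  rintro L - haL ⟨K, hK, hIK⟩ ⟨K', hK', hJK⟩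
  have hsub : (I ∪ J) + (K ∩ K') ⊆ L := by
    rw [Set.union_add, Set.union_subset_iff]
    exact ⟨hIK ▸ Set.add_subset_add_left Set.inter_subset_left,
      hJK ▸ Set.add_subset_add_left Set.inter_subset_right⟩
  refine ⟨K ∩ K', hK.inter hK', ?_⟩
  have hIL : I ∪ K = L := by rw [← add_eq_union_of_subset hI hK haL hIK.subset, hIK]
  have hJL : J ∪ K' = L := by rw [← add_eq_union_of_subset hJ hK' haL hJK.subset, hJK]
  rw [add_eq_union_of_subset (hI.union hJ) (hK.inter hK') haL hsub, Set.union_inter_distrib_left,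
    Set.union_right_comm, hIL, Set.union_assoc, hJL,
    Set.union_eq_left.2 (hJL ▸ Set.subset_union_left),
    Set.union_eq_right.2 (hIL ▸ Set.subset_union_left), Set.inter_self]

theorem IsNormalizedIdeal.lt_of_mod_eq (hX : IsNormalizedIdeal T X) (hm : m ∈ T) (haX : a ∉ X)
    {x : ℕ} (hx : x ∈ X) (hmod : x % m = a % m) : a < x := by
  by_contra! hxa
  exact haX (hX.mem_of_mod_eq hm hx hxa hmod.symm)

theorem add_eq_union_of_notMem (hm : m ∈ T) (hbig : Set.Ioi a ⊆ T)
    (hclasses : ∀ p q : ℕ, p % m = 0 ∨ q % m = 0 ∨ p % m = a % m ∨ q % m = a % m ∨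
      (p + q) % m = 0 ∨ (p + q) % m = a % m)
    (hX : IsNormalizedIdeal T X) (hY : IsNormalizedIdeal T Y) (ha : a ∉ X + Y) :
    X + Y = X ∪ Y := by
  have hXadd : X ⊆ X + Y := fun x hx => ⟨x, hx, 0, hY.1, rfl⟩
  have hYadd : Y ⊆ X + Y := fun y hy => ⟨0, hX.1, y, hy, zero_add y⟩
  refine subset_antisymm ?_ (Set.union_subset hXadd hYadd)
  rintro _ ⟨p, hp, q, hq, rfl⟩
  change p + q ∈ X ∪ Y
  have mem_of_lt (h : a < p + q) : p + q ∈ X ∪ Y := .inl (hX.subset (hbig h))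
  rcases hclasses p q with h | h | h | h | h | h
  · exact .inr (hY.mem_of_mod_eq hm hq le_add_self (by simp [Nat.add_mod, h]))
  · exact .inl (hX.mem_of_mod_eq hm hp le_self_add (by simp [Nat.add_mod, h]))
  · exact mem_of_lt (Nat.lt_add_right q (hX.lt_of_mod_eq hm (fun h => ha (hXadd h)) hp h))
  · exact mem_of_lt (Nat.lt_add_left p (hY.lt_of_mod_eq hm (fun h => ha (hYadd h)) hq h))
  · exact .inl (hX.mem_of_mod_eq_zero hm h)
  · exact mem_of_lt ((hX.add hY).lt_of_mod_eq hm ha (Set.add_mem_add hp hq) h)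

theorem IsNormalizedIdeal.exists_mem_iff_le (hX : IsNormalizedIdeal T X) (hm : m ∈ T) (hm0 : 0 < m)
    (hbig : Set.Ioi a ⊆ T) (r : ℕ) :
    ∃ x, x % m = r % m ∧ ∀ z, z % m = r % m → (z ∈ X ↔ x ≤ z) := by
  classical
  have hex : ∃ x, x ∈ X ∧ x % m = r % m := by
    refine ⟨r + m * (a + 1), hX.subset (hbig ?_), by simp⟩
    have := Nat.le_mul_of_pos_left (a + 1) hm0
    exact Set.mem_Ioi.2 (by lia)
  obtain ⟨hmem, hmod⟩ := Nat.find_spec hex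
  exact ⟨Nat.find hex, hmod, fun z hz => ⟨fun hzX => Nat.find_min' hex ⟨hzX, hz⟩,
    fun hle => hX.mem_of_mod_eq hm hmem hle (hz.trans hmod.symm)⟩⟩

end Omitting

section FourClasses

variable {T I J L : Set ℕ} {a x y x' y' x₁ y₁ x₂ y₂ : ℕ}

/-- For odd `a`, the set that omits `a` and whose least elements in the residue classes of `0`, `a`,
`3 * a` and `2` modulo `4` are `0`, `a + 4`, `x` and `y`. -/
def aperySet (a x y : ℕ) : Set ℕ :=
  {z | z % 4 = 0 ∨ z % 4 = a % 4 ∧ a < z ∨ z % 4 = 3 * a % 4 ∧ x ≤ z ∨ z % 4 = 2 ∧ y ≤ z}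

theorem mem_aperySet {z : ℕ} : z ∈ aperySet a x y ↔
    z % 4 = 0 ∨ z % 4 = a % 4 ∧ a < z ∨ z % 4 = 3 * a % 4 ∧ x ≤ z ∨ z % 4 = 2 ∧ y ≤ z :=
  Iff.rfl

theorem notMem_aperySet (ha : a % 2 = 1) : a ∉ aperySet a x y := by
  rw [mem_aperySet]
  lia

theorem IsNormalizedIdeal.exists_eq_aperySet (ha : a % 2 = 1) (h4 : 4 ∈ T)
    (hbig : Set.Ioi a ⊆ T) (hI : IsNormalizedIdeal T I) (haI : a ∉ I) :
    ∃ x y, x % 4 = 3 * a % 4 ∧ y % 4 = 2 ∧ I = aperySet a x y := by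
  obtain ⟨x, hx, mem_iff_x⟩ := hI.exists_mem_iff_le h4 (by simp) hbig (3 * a)
  obtain ⟨y, hy, mem_iff_y⟩ := hI.exists_mem_iff_le h4 (by simp) hbig 2
  refine ⟨x, y, hx, hy, Set.ext fun z => ?_⟩
  have mem_of_zero : z % 4 = 0 → z ∈ I := hI.mem_of_mod_eq_zero h4
  have mem_of_lt : a < z → z ∈ I := fun h => hI.subset (hbig h)
  have lt_of_mem : z ∈ I → z % 4 = a % 4 → a < z := hI.lt_of_mod_eq h4 haI
  rw [mem_aperySet]
  grind

/-- The relation `⪯` between `aperySet a x y` and `aperySet a x' y'` in terms of coordinates. If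
`x' < x`, then `x'` has to be in the complementary summand; if `y' < y`, then `y'` or `y' - x`
has to be. -/
def AperyPreceq (a x y x' y' : ℕ) : Prop :=
  x' ≤ x ∧ y' ≤ y ∧ (x' < x → a < x' + y ∧ y' ≤ x + x') ∧
    (y' < y → a < x + y' ∨ x + x' ≤ y' ∧ a + x < y' + y)

theorem le_of_aperySet_subset (ha : a % 2 = 1) (hx : x % 4 = 3 * a % 4) (hy : y % 4 = 2)
    (h : aperySet a x y ⊆ aperySet a x' y') : x' ≤ x ∧ y' ≤ y := by
  have hx' : x ∈ aperySet a x' y' := h (by rw [mem_aperySet]; lia)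
  have hy' : y ∈ aperySet a x' y' := h (by rw [mem_aperySet]; lia)
  rw [mem_aperySet] at hx' hy'
  lia

theorem aperySet_subset_aperySet (hx : x' ≤ x) (hy : y' ≤ y) :
    aperySet a x y ⊆ aperySet a x' y' := fun z => by
  rw [mem_aperySet, mem_aperySet]
  lia

theorem aperyPreceq_of_preceq (ha : a % 2 = 1) (hx : x % 4 = 3 * a % 4) (hy : y % 4 = 2)
    (hx' : x' % 4 = 3 * a % 4) (hy' : y' % 4 = 2) (hL : IsNormalizedIdeal T (aperySet a x' y'))
    (h : Preceq T (aperySet a x y) (aperySet a x' y')) : AperyPreceq a x y x' y' := by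
  obtain ⟨hsub, hdecomp⟩ := (preceq_iff hL).1 h
  obtain ⟨hxx', hyy'⟩ := le_of_aperySet_subset ha hx hy hsub
  refine ⟨hxx', hyy', fun hlt => ?_, fun hlt => ?_⟩
  · obtain ⟨i, hi, k, hik, hk⟩ := hdecomp x' (by rw [mem_aperySet]; lia)
    have hk0 := hk 0 (by rw [mem_aperySet]; lia)
    have hkx := hk x (by rw [mem_aperySet]; lia)
    have hky := hk y (by rw [mem_aperySet]; lia)
    rw [mem_aperySet] at hi hk0 hkx hky
    rcases hi with hi | hi | hi | hi <;> lia
  · obtain ⟨i, hi, k, hik, hk⟩ := hdecomp y' (by rw [mem_aperySet]; lia)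
    have hk0 := hk 0 (by rw [mem_aperySet]; lia)
    have hkx := hk x (by rw [mem_aperySet]; lia)
    have hky := hk y (by rw [mem_aperySet]; lia)
    rw [mem_aperySet] at hi hk0 hkx hky
    rcases hi with hi | hi | hi | hi <;> lia

theorem preceq_of_aperyPreceq (ha : a % 2 = 1) (hbig : Set.Ioi a ⊆ T) (hx : x % 4 = 3 * a % 4)
    (hL : IsNormalizedIdeal T (aperySet a x' y')) (h : AperyPreceq a x y x' y') :
    Preceq T (aperySet a x y) (aperySet a x' y') := by
  obtain ⟨hxx', hyy', hxlt, hylt⟩ := h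
  have hsub : aperySet a x y ⊆ aperySet a x' y' := aperySet_subset_aperySet hxx' hyy'
  refine (preceq_iff hL).2 ⟨hsub, fun z hz => ?_⟩
  by_cases hzI : z ∈ aperySet a x y
  · exact ⟨z, hzI, 0, rfl, fun j hj => hsub hj⟩
  have mem_of_lt (z : ℕ) (hz : a < z) : z ∈ aperySet a x' y' := hL.subset (hbig hz)
  rw [mem_aperySet] at hz hzI
  by_cases hsplit : z % 4 = 3 * a % 4 ∨ a < x + y'
  · refine ⟨0, .inl rfl, z, zero_add z, fun j hj => ?_⟩
    refine (lt_or_ge a (j + z)).elim (mem_of_lt _) fun hle => ?_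
    rw [mem_aperySet] at hj ⊢
    rcases hj with hj | hj | hj | hj <;> lia
  · refine ⟨x, by rw [mem_aperySet]; lia, z - x, by lia, fun j hj => ?_⟩
    refine (lt_or_ge a (j + (z - x))).elim (mem_of_lt _) fun hle => ?_
    rw [mem_aperySet] at hj ⊢
    rcases hj with hj | hj | hj | hj <;> lia

/-- The last coordinate of the supremum of `aperySet a x₁ y₁` and `aperySet a x₂ y₂` for `x₁ ≤ x₂`.
If `x₁ < x₂`, then `x₁` belongs to the second complementary summand, whence the term `x₁ + x₂`. -/
def aperySup (x₁ y₁ x₂ y₂ : ℕ) : ℕ :=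
  if x₁ = x₂ then min y₁ y₂ else min (min y₁ y₂) (x₁ + x₂)

theorem AperyPreceq.aperySup_left (hle : x₁ ≤ x₂) (h₁ : AperyPreceq a x₁ y₁ x' y')
    (h₂ : AperyPreceq a x₂ y₂ x' y') : AperyPreceq a x₁ y₁ x₁ (aperySup x₁ y₁ x₂ y₂) := by
  unfold AperyPreceq aperySup at *
  split_ifs <;> omega

theorem AperyPreceq.aperySup_right (hle : x₁ ≤ x₂) (h₁ : AperyPreceq a x₁ y₁ x' y')
    (h₂ : AperyPreceq a x₂ y₂ x' y') : AperyPreceq a x₂ y₂ x₁ (aperySup x₁ y₁ x₂ y₂) := by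
  unfold AperyPreceq aperySup at *
  split_ifs <;> omega

theorem AperyPreceq.aperySup_preceq (hle : x₁ ≤ x₂) (h₁ : AperyPreceq a x₁ y₁ x' y')
    (h₂ : AperyPreceq a x₂ y₂ x' y') : AperyPreceq a x₁ (aperySup x₁ y₁ x₂ y₂) x' y' := by
  unfold AperyPreceq aperySup at *
  split_ifs <;> omega

theorem IsNormalizedIdeal.aperySet_of_le {n : ℕ} (hbig : Set.Ioi a ⊆ T) (ha : a % 2 = 1)
    (hI : IsNormalizedIdeal T (aperySet a x y)) (hL : IsNormalizedIdeal T (aperySet a x' y'))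
    (hny : n ≤ y) (hyn : y' ≤ n) : IsNormalizedIdeal T (aperySet a x n) := by
  have hsub : aperySet a x y ⊆ aperySet a x n := aperySet_subset_aperySet le_rfl hny
  refine ⟨hsub hI.1, fun z hz t ht => ?_⟩
  by_cases hzI : z ∈ aperySet a x y
  · exact hsub (hI.2 z hzI t ht)
  refine (lt_or_ge a (z + t)).elim (fun hlt => hsub (hI.subset (hbig hlt))) fun hle => ?_
  have htI := hI.subset ht
  rw [mem_aperySet] at hz hzI htI
  obtain ⟨hz2, hnz⟩ : z % 4 = 2 ∧ n ≤ z := by lia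
  have hzt : z + t ∈ aperySet a x' y' := hL.2 z (by rw [mem_aperySet]; lia) t ht
  rw [mem_aperySet] at hzt ⊢
  rcases htI with h | h | h | h <;> lia

theorem aperySet_aperySup_subset {M : Set ℕ} (ha : a % 2 = 1) (h4 : 4 ∈ T) (hbig : Set.Ioi a ⊆ T)
    (hx₁ : x₁ % 4 = 3 * a % 4) (hx₂ : x₂ % 4 = 3 * a % 4) (hle : x₁ ≤ x₂)
    (hJ : IsNormalizedIdeal T (aperySet a x₂ y₂)) (hM : IsNormalizedIdeal T M)
    (hMsub : M ⊆ insert a (aperySet a x₁ (aperySup x₁ y₁ x₂ y₂)))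
    (hIM : Preceq T (aperySet a x₁ y₁) M) (hJM : Preceq T (aperySet a x₂ y₂) M) :
    aperySet a x₁ (aperySup x₁ y₁ x₂ y₂) ⊆ M := by
  intro z hz
  by_cases hzI : z ∈ aperySet a x₁ y₁
  · exact hIM.subset hzI
  by_cases hzJ : z ∈ aperySet a x₂ y₂
  · exact hJM.subset hzJ
  rw [mem_aperySet] at hz hzI hzJ
  obtain ⟨hlt, hle_z, hz2⟩ : x₁ < x₂ ∧ x₁ + x₂ ≤ z ∧ z % 4 = 2 := by
    unfold aperySup at hz
    split_ifs at hz <;> omega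
  suffices x₁ + x₂ ∈ M from hM.mem_of_mod_eq h4 this hle_z (by lia)
  have hx₁a : x₁ ≤ a := by
    by_contra! h
    have hx₁J := hJ.subset (hbig h)
    rw [mem_aperySet] at hx₁J
    lia
  obtain ⟨j, hj, k, hjk, add_mem⟩ :=
    ((preceq_iff hM).1 hJM).2 x₁ (hIM.subset (by rw [mem_aperySet]; lia))
  have hk : k = a ∨ k ∈ aperySet a x₁ (aperySup x₁ y₁ x₂ y₂) :=
    hMsub (zero_add k ▸ add_mem 0 hJ.1)
  have hj0 : j % 4 = 0 := by
    rw [mem_aperySet] at hj hk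
    rcases hj with hj | hj | hj | hj <;> lia
  rw [show x₁ + x₂ = (x₂ + j) + k by lia]
  exact add_mem _ (by rw [mem_aperySet]; lia)

theorem exists_isSupOmitting_of_odd (ha : a % 2 = 1) (h4 : 4 ∈ T) (hbig : Set.Ioi a ⊆ T)
    (hI : IsNormalizedIdeal T I) (hJ : IsNormalizedIdeal T J) (hL : IsNormalizedIdeal T L)
    (haL : a ∉ L) (hIL : Preceq T I L) (hJL : Preceq T J L) : ∃ N, IsSupOmitting T a I J N := by
  obtain ⟨x₁, y₁, hx₁, hy₁, rfl⟩ := hI.exists_eq_aperySet ha h4 hbig fun h => haL (hIL.subset h)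
  obtain ⟨x₂, y₂, hx₂, hy₂, rfl⟩ := hJ.exists_eq_aperySet ha h4 hbig fun h => haL (hJL.subset h)
  obtain ⟨x', y', hx', hy', rfl⟩ := hL.exists_eq_aperySet ha h4 hbig haL
  wlog hle : x₁ ≤ x₂ generalizing x₁ y₁ x₂ y₂
  · exact (this x₂ y₂ hx₂ hy₂ hJ x₁ y₁ hx₁ hy₁ hI hJL hIL (le_of_not_ge hle)).imp fun _ h => h.symm
  have hIL' := aperyPreceq_of_preceq ha hx₁ hy₁ hx' hy' hL hIL
  have hJL' := aperyPreceq_of_preceq ha hx₂ hy₂ hx' hy' hL hJL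
  have hN : IsNormalizedIdeal T (aperySet a x₁ (aperySup x₁ y₁ x₂ y₂)) :=
    hI.aperySet_of_le hbig ha hL (hIL'.aperySup_left hle hJL').2.1
      (hIL'.aperySup_preceq hle hJL').2.1
  refine ⟨_, hN, notMem_aperySet ha,
    preceq_of_aperyPreceq ha hbig hx₁ hN (hIL'.aperySup_left hle hJL'),
    preceq_of_aperyPreceq ha hbig hx₂ hN (hIL'.aperySup_right hle hJL'), ?_,
    fun M hM hMN hIM hJM => aperySet_aperySup_subset ha h4 hbig hx₁ hx₂ hle hJ hM hMN hIM hJM⟩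
  intro L' hL' haL' hIL' hJL'
  obtain ⟨x'', y'', hx'', hy'', rfl⟩ := hL'.exists_eq_aperySet ha h4 hbig haL'
  exact preceq_of_aperyPreceq ha hbig hx₁ hL' <|
    (aperyPreceq_of_preceq ha hx₁ hy₁ hx'' hy'' hL' hIL').aperySup_preceq hle
      (aperyPreceq_of_preceq ha hx₂ hy₂ hx'' hy'' hL' hJL')

end FourClasses

section RemoveElement

variable {S T I J L X Y : Set ℕ} {a m : ℕ}

theorem exists_isSupOmitting (hm : m ∈ T) (hm0 : m ≠ 0) (hm4 : m ≤ 4) (hbig : Set.Ioi a ⊆ T)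
    (hI : IsNormalizedIdeal T I) (hJ : IsNormalizedIdeal T J) (hL : IsNormalizedIdeal T L)
    (haL : a ∉ L) (hIL : Preceq T I L) (hJL : Preceq T J L) : ∃ N, IsSupOmitting T a I J N := by
  by_cases hodd : m = 4 ∧ a % 2 = 1
  · obtain ⟨rfl, ha⟩ := hodd
    exact exists_isSupOmitting_of_odd ha hm hbig hI hJ hL haL hIL hJL
  · have ham : a % m ≠ 0 := fun h => haL (hL.mem_of_mod_eq_zero hm h)
    refine ⟨I ∪ J, isSupOmitting_union (fun X Y => add_eq_union_of_notMem hm hbig fun p q => ?_)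
      hI hJ haL hIL hJL⟩
    interval_cases m <;> omega

theorem isNormalizedIdeal_insert (hS : Set.Ici a ⊆ S) (hX : IsNormalizedIdeal (S \ {a}) X) :
    IsNormalizedIdeal S (insert a X) := by
  have mem_of_le {z : ℕ} (hz : a ≤ z) : z ∈ insert a X := by
    rcases hz.eq_or_lt with rfl | hlt
    · exact .inl rfl
    · exact .inr (hX.subset ⟨hS hz, hlt.ne'⟩)
  refine ⟨.inr hX.1, fun i hi s hs => ?_⟩
  rcases hi with rfl | hi
  · exact mem_of_le le_self_add
  rcases eq_or_ne s a with rfl | hsa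
  · exact mem_of_le le_add_self
  · exact .inr (hX.2 i hi s ⟨hs, hsa⟩)

theorem preceq_insert_iff (hS : Set.Ici a ⊆ S) (hX : IsNormalizedIdeal (S \ {a}) X)
    (hY : IsNormalizedIdeal S Y) : Preceq S (insert a X) Y ↔ Preceq (S \ {a}) X Y := by
  have mem_of_le {z : ℕ} (hz : a ≤ z) : z ∈ Y := hY.subset (hS hz)
  rw [← preceq_congr_left hY (hY.anti Set.sdiff_subset), preceq_iff hY, preceq_iff hY]
  constructor
  · rintro ⟨hsub, hdecomp⟩
    refine ⟨(Set.subset_insert a X).trans hsub, fun z hz => ?_⟩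
    obtain ⟨i, rfl | hi, k, hik, hk⟩ := hdecomp z hz
    · exact ⟨0, hX.1, z, zero_add z, fun j _ => mem_of_le (by lia)⟩
    · exact ⟨i, hi, k, hik, fun j hj => hk j (.inr hj)⟩
  · rintro ⟨hsub, hdecomp⟩
    refine ⟨Set.insert_subset (mem_of_le le_rfl) hsub, fun z hz => ?_⟩
    obtain ⟨i, hi, k, hik, hk⟩ := hdecomp z hz
    refine ⟨i, .inr hi, k, hik, ?_⟩
    rintro j (rfl | hj)
    exacts [mem_of_le le_self_add, hk j hj]

theorem IsNormalizedIdeal.of_sdiff_singleton (hS : Set.Ici a ⊆ S)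
    (hX : IsNormalizedIdeal (S \ {a}) X) (haX : a ∈ X) : IsNormalizedIdeal S X :=
  Set.insert_eq_of_mem haX ▸ isNormalizedIdeal_insert hS hX

theorem IsSupNI.of_insert {M : Set ℕ} (hS : Set.Ici a ⊆ S) (hI : IsNormalizedIdeal (S \ {a}) I)
    (hJ : IsNormalizedIdeal (S \ {a}) J) (hM : IsSupNI S (insert a I) (insert a J) M)
    (mem_of_preceq : ∀ L, IsNormalizedIdeal (S \ {a}) L → Preceq (S \ {a}) I L →
      Preceq (S \ {a}) J L → a ∈ L) : IsSupNI (S \ {a}) I J M := by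
  obtain ⟨hM, hIM, hJM, hleast⟩ := hM
  refine ⟨hM.anti Set.sdiff_subset, (preceq_insert_iff hS hI hM).1 hIM,
    (preceq_insert_iff hS hJ hM).1 hJM, fun L hL hIL hJL => ?_⟩
  have hL' := hL.of_sdiff_singleton hS (mem_of_preceq L hL hIL hJL)
  exact (preceq_congr_left hL' hL).1 <|
    hleast L hL' ((preceq_insert_iff hS hI hL').2 hIL) ((preceq_insert_iff hS hJ hL').2 hJL)

theorem IsSupOmitting.isSupNI {M N : Set ℕ} (hS : Set.Ici a ⊆ S)
    (hI : IsNormalizedIdeal (S \ {a}) I) (hJ : IsNormalizedIdeal (S \ {a}) J)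
    (hN : IsSupOmitting (S \ {a}) a I J N) (hM : IsSupNI S (insert a I) (insert a J) M) :
    IsSupNI (S \ {a}) I J N := by
  obtain ⟨hM, hIM, hJM, hleast⟩ := hM
  have preceq_of_mem {L : Set ℕ} (hL : IsNormalizedIdeal S L) (hIL : Preceq (S \ {a}) I L)
      (hJL : Preceq (S \ {a}) J L) : Preceq S M L :=
    hleast L hL ((preceq_insert_iff hS hI hL).2 hIL) ((preceq_insert_iff hS hJ hL).2 hJL)
  have hN' : IsNormalizedIdeal S (insert a N) := isNormalizedIdeal_insert hS hN.isNormalizedIdeal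
  have hNN' : Preceq (S \ {a}) N (insert a N) :=
    (preceq_insert_iff hS hN.isNormalizedIdeal hN').1 (preceq_refl hN')
  have hMN : M = insert a N := by
    have hsub : M ⊆ insert a N :=
      (preceq_of_mem hN' (hN.left_preceq.trans hNN') (hN.right_preceq.trans hNN')).subset
    refine hsub.antisymm (Set.insert_subset (hM.subset (hS Set.self_mem_Ici)) ?_)
    exact hN.subset_of_preceq M (hM.anti Set.sdiff_subset) hsub
      ((preceq_insert_iff hS hI hM).1 hIM) ((preceq_insert_iff hS hJ hM).1 hJM)
  refine ⟨hN.isNormalizedIdeal, hN.left_preceq, hN.right_preceq, fun L hL hIL hJL => ?_⟩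
  by_cases haL : a ∈ L
  · have hL' := hL.of_sdiff_singleton hS haL
    exact (preceq_insert_iff hS hN.isNormalizedIdeal hL').1 (hMN ▸ preceq_of_mem hL' hIL hJL)
  · exact hN.preceq L hL haL hIL hJL

theorem exists_isSupNI_sdiff_singleton (hlat : NILattice S) (hS : Set.Ici a ⊆ S)
    (hm : m ∈ S \ {a}) (hm0 : m ≠ 0) (hm4 : m ≤ 4) (hI : IsNormalizedIdeal (S \ {a}) I)
    (hJ : IsNormalizedIdeal (S \ {a}) J) : ∃ M, IsSupNI (S \ {a}) I J M := by
  obtain ⟨M, hM⟩ :=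
    (hlat _ _ (isNormalizedIdeal_insert hS hI) (isNormalizedIdeal_insert hS hJ)).1
  by_cases homit : ∃ L, IsNormalizedIdeal (S \ {a}) L ∧ a ∉ L ∧ Preceq (S \ {a}) I L ∧
      Preceq (S \ {a}) J L
  · obtain ⟨L, hL, haL, hIL, hJL⟩ := homit
    have hbig : Set.Ioi a ⊆ S \ {a} := fun z hz => ⟨hS (Set.mem_Ici.2 (le_of_lt hz)), ne_of_gt hz⟩
    obtain ⟨N, hN⟩ := exists_isSupOmitting hm hm0 hm4 hbig hI hJ hL haL hIL hJL
    exact ⟨N, hN.isSupNI hS hI hJ hM⟩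
  · exact ⟨M, hM.of_insert hS hI hJ fun L hL hIL hJL =>
      by_contra fun haL => homit ⟨L, hL, haL, hIL, hJL⟩⟩

theorem IsNumericalSemigroup.sdiff_singleton (hS : IsNumericalSemigroup S)
    (ha : IsMinimalGenerator S a) : IsNumericalSemigroup (S \ {a}) := by
  obtain ⟨-, ha0, not_sum⟩ := ha
  refine ⟨⟨hS.1, ha0.symm⟩, fun b hb c hc => ⟨hS.2.1 b hb.1 c hc.1, fun hbc => ?_⟩, ?_⟩
  · rw [Set.mem_singleton_iff] at hbc
    refine not_sum ⟨b, hb.1, c, hc.1, ?_, ?_, hbc.symm⟩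
    · rintro rfl
      exact hc.2 (by simpa using hbc)
    · rintro rfl
      exact hb.2 (by simpa using hbc)
  · rw [Set.sdiff_eq, Set.compl_inter, compl_compl]
    exact hS.2.2.union (Set.finite_singleton a)

theorem IsNumericalSemigroup.mem_of_frobNS_lt (hS : IsNumericalSemigroup S) {z : ℕ}
    (hz : frobNS S < z) : z ∈ S := by
  by_contra hzS
  exact hz.not_ge (le_csSup hS.2.2.bddAbove hzS)

theorem IsNumericalSemigroup.multNS_mem_and_ne_zero (hS : IsNumericalSemigroup S) :
    multNS S ∈ S ∧ multNS S ≠ 0 :=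
  Nat.sInf_mem (s := {n | n ∈ S ∧ n ≠ 0})
    ⟨frobNS S + 1, hS.mem_of_frobNS_lt (Nat.lt_succ_self _), Nat.succ_ne_zero _⟩

end RemoveElement

/-- Theorem: if `(𝔑(S), ⪯)` is a lattice and `a` is a minimal
generator of `S` with `a ≠ m(S)` and `a > F(S)`, then `(𝔑(S \ {a}), ⪯)` is a
lattice as well. -/
theorem NILattice_remove_min_gen (S : Set ℕ) (hS : IsNumericalSemigroup S)
    (hlat : NILattice S)
    (a : ℕ) (ha : IsMinimalGenerator S a) (hne : a ≠ multNS S) (hgt : frobNS S < a) :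
    NILattice (S \ {a}) := by
  obtain ⟨hm, hm0⟩ := hS.multNS_mem_and_ne_zero
  have hIci : Set.Ici a ⊆ S := fun z hz => hS.mem_of_frobNS_lt (hgt.trans_le hz)
  exact NILattice_of_exists_isSupNI (hS.sdiff_singleton ha) fun I J hI hJ =>
    exists_isSupNI_sdiff_singleton hlat hIci ⟨hm, hne.symm⟩ hm0 hlat.multNS_le_four hI hJ
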